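/- Let a ≥ b ≥ k ≥ 1 with n ≥ a+b. Then the cokernel of γ_k: Λ^a⊗Λ^k⊗Λ^{b−k} → Λ^a⊗Λ^b is isomorphic as a G-module to the Schur module L_{(a,b)} if and only if a > k, or a = b = k = 1. -/

import Mathlib

open TensorProduct

set_option synthInstance.maxHeartbeats 1000000
set_option maxSynthPendingDepth 3
set_option maxHeartbeats 1000000

noncomputable section

namespace MMS

variable (K : Type) [Field K] [CharZero K] (n : ℕ)

/-- `V = K^n`, the natural module of `G = GL(n,K)`. -/
abbrev V : Type := Fin n → K

/-- `Λ^p`, the `p`-th exterior power of `V`. -/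
abbrev Lam (p : ℕ) : Type := ⋀[K]^p (V K n)

/-- The wedge `v_1 ∧ ⋯ ∧ v_p ∈ Λ^p`. -/
def wedge {p : ℕ} (v : Fin p → V K n) : Lam K n p :=
  ⟨ExteriorAlgebra.ιMulti K p v, ExteriorAlgebra.ιMulti_range K p (Set.mem_range_self v)⟩

/-- Transport along an equality of degrees. -/
def ecast {p q : ℕ} (h : p = q) : Lam K n p ≃ₗ[K] Lam K n q :=
  h ▸ LinearEquiv.refl K (Lam K n p)

/-- `m` is the wedge multiplication map `Λ^p ⊗ Λ^q → Λ^{p+q}`. -/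
def IsMulMap (p q : ℕ) (m : Lam K n p ⊗[K] Lam K n q →ₗ[K] Lam K n (p+q)) : Prop :=
  ∀ (v : Fin p → V K n) (w : Fin q → V K n),
    m (wedge K n v ⊗ₜ[K] wedge K n w) = wedge K n (Fin.append v w)

/-- The set of `(p,q)`-shuffles: permutations `σ` of `{1, …, p+q}` which are strictly
increasing on the first `p` and on the last `q` indices. -/
def shuffles (p q : ℕ) : Finset (Equiv.Perm (Fin (p+q))) :=
  Finset.univ.filter (fun σ =>
    (∀ i j : Fin (p+q), i < j → (j : ℕ) < p → σ i < σ j) ∧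
    (∀ i j : Fin (p+q), i < j → p ≤ (i : ℕ) → σ i < σ j))

/-- `D` is the component `Δ_{p,q} : Λ^{p+q} → Λ^p ⊗ Λ^q` of the comultiplication, i.e.
`Δ_{p,q}(v_1 ∧ ⋯ ∧ v_{p+q}) = Σ_σ sgn(σ) (v_{σ(1)} ∧ ⋯ ∧ v_{σ(p)}) ⊗ (v_{σ(p+1)} ∧ ⋯ ∧ v_{σ(p+q)})`,
the sum being over all `(p,q)`-shuffles. -/
def IsComulMap (p q : ℕ) (D : Lam K n (p+q) →ₗ[K] Lam K n p ⊗[K] Lam K n q) : Prop :=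
  ∀ v : Fin (p+q) → V K n,
    D (wedge K n v) =
      ∑ σ ∈ shuffles p q,
        (Equiv.Perm.sign σ : ℤ) •
          (wedge K n (fun i => v (σ (Fin.castAdd q i))) ⊗ₜ[K]
            wedge K n (fun i => v (σ (Fin.natAdd p i))))

variable (mf : ∀ p q : ℕ, Lam K n p ⊗[K] Lam K n q →ₗ[K] Lam K n (p+q))
variable (Df : ∀ p q : ℕ, Lam K n (p+q) →ₗ[K] Lam K n p ⊗[K] Lam K n q)

/-- The map `δ_t = (m ⊗ 1) ∘ (1 ⊗ Δ_{t,b-t}) : Λ^a ⊗ Λ^b → Λ^{a+t} ⊗ Λ^{b-t}`. -/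
def deltaMap (a b t : ℕ) (ht : t ≤ b) :
    Lam K n a ⊗[K] Lam K n b →ₗ[K] Lam K n (a+t) ⊗[K] Lam K n (b-t) :=
  (TensorProduct.map (mf a t) LinearMap.id)
    ∘ₗ (TensorProduct.assoc K (Lam K n a) (Lam K n t) (Lam K n (b-t))).symm.toLinearMap
    ∘ₗ (TensorProduct.map LinearMap.id
        ((Df t (b-t)) ∘ₗ (ecast K n (by omega : b = t + (b-t))).toLinearMap))

/-- The map `θ_t = (1 ⊗ m) ∘ (Δ_{a-t,t} ⊗ 1) : Λ^a ⊗ Λ^b → Λ^{a-t} ⊗ Λ^{b+t}`. -/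
def thetaMap (a b t : ℕ) (ht : t ≤ a) :
    Lam K n a ⊗[K] Lam K n b →ₗ[K] Lam K n (a-t) ⊗[K] Lam K n (b+t) :=
  (TensorProduct.map LinearMap.id
      ((ecast K n (by omega : t + b = b + t)).toLinearMap ∘ₗ mf t b))
    ∘ₗ (TensorProduct.assoc K (Lam K n (a-t)) (Lam K n t) (Lam K n b)).toLinearMap
    ∘ₗ (TensorProduct.map
        ((Df (a-t) t) ∘ₗ (ecast K n (by omega : a = (a-t) + t)).toLinearMap) LinearMap.id)

/-- The map `Φ_t = θ_t ∘ δ_t : Λ^a ⊗ Λ^b → Λ^a ⊗ Λ^b`. -/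
def PhiMap (a b t : ℕ) (hta : t ≤ a) (htb : t ≤ b) :
    Lam K n a ⊗[K] Lam K n b →ₗ[K] Lam K n a ⊗[K] Lam K n b :=
  (TensorProduct.congr (ecast K n (by omega : a + t - t = a))
      (ecast K n (by omega : b - t + t = b))).toLinearMap
    ∘ₗ thetaMap K n mf Df (a+t) (b-t) t (by omega)
    ∘ₗ deltaMap K n mf Df a b t htb

/-- The map `Φ_t`, extended by `0` to all `t`. -/
def PhiMap' (a b t : ℕ) :
    Lam K n a ⊗[K] Lam K n b →ₗ[K] Lam K n a ⊗[K] Lam K n b :=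
  if h : t ≤ a ∧ t ≤ b then PhiMap K n mf Df a b t h.1 h.2 else 0

/-- The map `θ_1 : Λ^{a+1} ⊗ Λ^{b-1} → Λ^a ⊗ Λ^b` (for `b ≥ 1`). -/
def theta1 (a b : ℕ) (hb : 1 ≤ b) :
    Lam K n (a+1) ⊗[K] Lam K n (b-1) →ₗ[K] Lam K n a ⊗[K] Lam K n b :=
  (TensorProduct.congr (ecast K n (by omega : a + 1 - 1 = a))
      (ecast K n (by omega : b - 1 + 1 = b))).toLinearMap
    ∘ₗ thetaMap K n mf Df (a+1) (b-1) 1 (by omega)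

/-- The submodule of relations defining the Schur module `L_{(a,b)}`: the image of
`θ_1` if `b ≥ 1`, and `0` if `b = 0`. -/
def schurRel (a b : ℕ) : Submodule K (Lam K n a ⊗[K] Lam K n b) :=
  if hb : 1 ≤ b then LinearMap.range (theta1 K n mf Df a b hb) else ⊥

/-- The Schur module `L_{(a,b)}`, realized as the cokernel of `θ_1` (in characteristic zero). -/
abbrev SchurL (a b : ℕ) : Type :=
  (Lam K n a ⊗[K] Lam K n b) ⧸ schurRel K n mf Df a b

/-- The projection `π_{(a,b)} : Λ^a ⊗ Λ^b → L_{(a,b)}`. -/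
def schurProj (a b : ℕ) : Lam K n a ⊗[K] Lam K n b →ₗ[K] SchurL K n mf Df a b :=
  (schurRel K n mf Df a b).mkQ

/-- The coefficient `c_t(a,b,i) = C(i,t)·C(a-b+t+i,t)`. -/
def cCoef (a b t i : ℕ) : ℕ := (i.choose t) * ((a-b+t+i).choose t)

/-- The group `G = GL(n,K)`. -/
abbrev GLn : Type := Matrix.GeneralLinearGroup (Fin n) K

/-- `rho` is the family of natural actions of `G = GL(n,K)` on the exterior powers `Λ^p`
of the natural module `V = K^n`. -/
def IsExtAction (rho : ∀ p : ℕ, GLn K n → (Lam K n p →ₗ[K] Lam K n p)) : Prop :=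
  ∀ (p : ℕ) (g : GLn K n) (v : Fin p → V K n),
    rho p g (wedge K n v) =
      wedge K n (fun i => Matrix.toLin' (g : Matrix (Fin n) (Fin n) K) (v i))

/-- The action of `g ∈ GL(n,K)` on `Λ^a ⊗ Λ^b`. -/
def rhoT (rho : ∀ p : ℕ, GLn K n → (Lam K n p →ₗ[K] Lam K n p)) (a b : ℕ) (g : GLn K n) :
    Lam K n a ⊗[K] Lam K n b →ₗ[K] Lam K n a ⊗[K] Lam K n b :=
  TensorProduct.map (rho a g) (rho b g)

/-- The quotients `M₁ ⧸ N₁` and `M₂ ⧸ N₂` are isomorphic as representations, with respect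
to the given actions `ρ₁, ρ₂` on `M₁` and `M₂` (which descend to the quotients). -/
def IsQuotIso {G' : Type} {M₁ M₂ : Type} [AddCommGroup M₁] [Module K M₁]
    [AddCommGroup M₂] [Module K M₂]
    (N₁ : Submodule K M₁) (N₂ : Submodule K M₂)
    (ρ₁ : G' → M₁ →ₗ[K] M₁) (ρ₂ : G' → M₂ →ₗ[K] M₂) : Prop :=
  ∃ e : (M₁ ⧸ N₁) ≃ₗ[K] (M₂ ⧸ N₂),
    ∀ (g : G') (x : M₁) (y : M₂),
      e (Submodule.Quotient.mk x) = Submodule.Quotient.mk y →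
      e (Submodule.Quotient.mk (ρ₁ g x)) = Submodule.Quotient.mk (ρ₂ g y)

/-- The "multiply in pairs" map
`(Λ^{p₁} ⊗ Λ^{q₁}) ⊗ (Λ^{p₂} ⊗ Λ^{q₂}) → Λ^{p₁+p₂} ⊗ Λ^{q₁+q₂}`. -/
def pairMul (p₁ q₁ p₂ q₂ : ℕ) :
    (Lam K n p₁ ⊗[K] Lam K n q₁) ⊗[K] (Lam K n p₂ ⊗[K] Lam K n q₂) →ₗ[K]
      Lam K n (p₁+p₂) ⊗[K] Lam K n (q₁+q₂) :=
  (TensorProduct.map (mf p₁ p₂) (mf q₁ q₂))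
    ∘ₗ (TensorProduct.tensorTensorTensorComm K (Lam K n p₁) (Lam K n q₁)
        (Lam K n p₂) (Lam K n q₂)).toLinearMap

/-- The map `φ_k = (m ⊗ m) ∘ (1 ⊗ τ ⊗ 1) ∘ (Δ_{a-k,k} ⊗ Δ_{k,b-k}) : Λ^a ⊗ Λ^b → Λ^a ⊗ Λ^b`. -/
def phiSmall (a b k : ℕ) (hka : k ≤ a) (hkb : k ≤ b) :
    Lam K n a ⊗[K] Lam K n b →ₗ[K] Lam K n a ⊗[K] Lam K n b :=
  (TensorProduct.congr (ecast K n (by omega : (a-k) + k = a))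
      (ecast K n (by omega : k + (b-k) = b))).toLinearMap
    ∘ₗ pairMul K n mf (a-k) k k (b-k)
    ∘ₗ (TensorProduct.map
        ((Df (a-k) k) ∘ₗ (ecast K n (by omega : a = (a-k) + k)).toLinearMap)
        ((Df k (b-k)) ∘ₗ (ecast K n (by omega : b = k + (b-k))).toLinearMap))

/-- The map `ψ_k = C(b,k)·1 - φ_k : Λ^a ⊗ Λ^b → Λ^a ⊗ Λ^b`. -/
def psiSmall (a b k : ℕ) (hka : k ≤ a) (hkb : k ≤ b) :
    Lam K n a ⊗[K] Lam K n b →ₗ[K] Lam K n a ⊗[K] Lam K n b :=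
  (Nat.choose b k : K) • LinearMap.id - phiSmall K n mf Df a b k hka hkb

/-- The map `β_k = (m ⊗ m) ∘ (1 ⊗ τ ⊗ 1) ∘ (Δ_{a-k,k} ⊗ 1 ⊗ 1) : Λ^a ⊗ (Λ^k ⊗ Λ^{b-k}) → Λ^a ⊗ Λ^b`. -/
def betaMap (a b k : ℕ) (hka : k ≤ a) (hkb : k ≤ b) :
    Lam K n a ⊗[K] (Lam K n k ⊗[K] Lam K n (b-k)) →ₗ[K] Lam K n a ⊗[K] Lam K n b :=
  (TensorProduct.congr (ecast K n (by omega : (a-k) + k = a))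
      (ecast K n (by omega : k + (b-k) = b))).toLinearMap
    ∘ₗ pairMul K n mf (a-k) k k (b-k)
    ∘ₗ (TensorProduct.map
        ((Df (a-k) k) ∘ₗ (ecast K n (by omega : a = (a-k) + k)).toLinearMap)
        LinearMap.id)

/-- The map `γ_k : Λ^a ⊗ (Λ^k ⊗ Λ^{b-k}) → Λ^a ⊗ Λ^b`,
`γ_k(x ⊗ y ⊗ z) = x ⊗ (y ∧ z) - β_k(x ⊗ y ⊗ z)`. -/
def gammaMap (a b k : ℕ) (hka : k ≤ a) (hkb : k ≤ b) :
    Lam K n a ⊗[K] (Lam K n k ⊗[K] Lam K n (b-k)) →ₗ[K] Lam K n a ⊗[K] Lam K n b :=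
  (TensorProduct.map LinearMap.id
      ((ecast K n (by omega : k + (b-k) = b)).toLinearMap ∘ₗ mf k (b-k)))
    - betaMap K n mf Df a b k hka hkb

/-- The quantity `d_k(a,b,t)` (for the given `i`), from Lemma 5.3 of the paper. -/
def dInt (a b k i t : ℕ) : ℤ :=
  1 - ∑ j ∈ Finset.Icc (i - min (b-k) i) t,
        (-1:ℤ)^j * ((a-k+j).choose (a-k) : ℤ) * ((b-k+t-i).choose (t-j) : ℤ)

end MMS

namespace MMS

section Combinatorics

theorem piecewise_comp_shuffle {α : Type*} {p q : ℕ} (σ : Equiv.Perm (Fin (p + q))) (u w : Fin (p + q) → α) :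
    ((Finset.univ.image (fun i : Fin p => σ (Fin.castAdd q i))).piecewise u w) ∘ σ =
      Fin.append (fun i => u (σ (Fin.castAdd q i))) (fun i => w (σ (Fin.natAdd p i))) := by
  funext i
  refine Fin.addCases (fun i => ?_) (fun i => ?_) i
  · simp [Finset.piecewise]
  · have h : Fin.natAdd p i ∉ Set.range (Fin.castAdd q) := by
      rintro ⟨j, hj⟩
      simp only [Fin.ext_iff, Fin.val_castAdd, Fin.val_natAdd] at hj
      omega
    have h' : ∀ j, ¬ Fin.castAdd q j = Fin.natAdd p i := fun j hj => h ⟨j, hj⟩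
    simp [Finset.piecewise, h']

variable {R M N : Type*} [CommRing R] [AddCommGroup M] [Module R M] [AddCommGroup N] [Module R N]

/-- Double counting: expanding `u + w` on all `p`-subsets. -/
theorem sum_powersetCard_map_piecewise_add {m p : ℕ} (hp : p ≤ m) (f : M [⋀^Fin m]→ₗ[R] N)
    (u w : Fin m → M) :
    ∑ S ∈ Finset.powersetCard p Finset.univ, f (S.piecewise (u + w) w) =
      ∑ Q : Finset (Fin m), (m - Q.card).choose (m - p) • f (Q.piecewise u w) := by
  have h1 : ∀ S : Finset (Fin m), f (S.piecewise (u + w) w) =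
      ∑ Q ∈ S.powerset, f (Q.piecewise u w) := fun S =>
    f.toMultilinearMap.map_piecewise_add u w S
  simp_rw [h1]
  rw [Finset.sum_comm' (t' := Finset.univ)
    (s' := fun Q => (Finset.powersetCard p Finset.univ).filter (fun S => Q ⊆ S))]
  · refine Finset.sum_congr rfl fun Q _ => ?_
    rw [Finset.sum_const]
    congr 1
    have hQ : Qᶜ.card = m - Q.card := by rw [Finset.card_compl, Fintype.card_fin]
    rw [← hQ, ← Finset.card_powersetCard]
    refine Finset.card_nbij' compl compl ?_ ?_ ?_ ?_
    · intro S hS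
      simp only [Finset.mem_coe, Finset.mem_filter, Finset.mem_powersetCard_univ] at hS
      simp [Finset.card_compl, hS.1, hS.2]
    · intro S hS
      rw [Finset.mem_coe, Finset.mem_powersetCard] at hS
      have h2 : Q ⊆ Sᶜ := Finset.subset_compl_comm.1 hS.1
      simp only [Finset.mem_coe, Finset.mem_filter, Finset.mem_powersetCard_univ, Finset.card_compl, Fintype.card_fin, h2, and_true, hS.2]
      omega
    · intro S _; simp
    · intro S _; simp
  · intro S Q
    simp [and_comm]

theorem card_image_castAdd {p q : ℕ} (σ : Equiv.Perm (Fin (p + q))) :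
    (Finset.univ.image (fun i : Fin p => σ (Fin.castAdd q i))).card = p := by
  exact (Finset.card_image_of_injective _ (σ.injective.comp (Fin.castAdd_injective p q))).trans
    (by simp)

theorem compl_image_castAdd {p q : ℕ} (σ : Equiv.Perm (Fin (p + q))) :
    (Finset.univ.image (fun i : Fin p => σ (Fin.castAdd q i)))ᶜ =
      Finset.univ.image (fun i : Fin q => σ (Fin.natAdd p i)) := by
  ext x
  obtain ⟨i, rfl⟩ := σ.surjective x
  refine Fin.addCases (fun i => ?_) (fun i => ?_) i
  · simp [Fin.ext_iff]
    intro j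
    omega
  · simp [Fin.ext_iff]
    intro j
    omega

theorem shuffle_eq_of_image_eq {p q : ℕ} {σ τ : Equiv.Perm (Fin (p + q))}
    (hσ : σ ∈ shuffles p q) (hτ : τ ∈ shuffles p q)
    (h : Finset.univ.image (fun i : Fin p => σ (Fin.castAdd q i)) =
      Finset.univ.image (fun i : Fin p => τ (Fin.castAdd q i))) : σ = τ := by
  have key : ∀ {r : ℕ} {f g : Fin r → Fin (p + q)}, StrictMono f → StrictMono g →
      Finset.univ.image f = Finset.univ.image g → f = g := by
    intro r f g hf hg hfg
    refine (hf.range_inj hg).1 ?_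
    simpa using congrArg (fun s : Finset (Fin (p + q)) => (s : Set (Fin (p + q)))) hfg
  simp only [shuffles, Finset.mem_filter, Finset.mem_univ, true_and] at hσ hτ
  have h1 := key (f := fun i : Fin p => σ (Fin.castAdd q i))
    (g := fun i : Fin p => τ (Fin.castAdd q i))
    (fun i j hij => hσ.1 _ _ hij (by simp))
    (fun i j hij => hτ.1 _ _ hij (by simp)) h
  have h2 := key (f := fun i : Fin q => σ (Fin.natAdd p i))
    (g := fun i : Fin q => τ (Fin.natAdd p i))
    (fun i j hij => hσ.2 _ _ (by simpa using hij) (by simp))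
    (fun i j hij => hτ.2 _ _ (by simpa using hij) (by simp))
    (by rw [← compl_image_castAdd, ← compl_image_castAdd, h])
  ext i : 1
  refine Fin.addCases (fun i => congrFun h1 i) (fun i => congrFun h2 i) i

theorem exists_shuffle_image_eq {p q : ℕ} {S : Finset (Fin (p + q))} (hS : S.card = p) :
    ∃ σ ∈ shuffles p q, Finset.univ.image (fun i : Fin p => σ (Fin.castAdd q i)) = S := by
  have hS' : Sᶜ.card = q := by rw [Finset.card_compl, hS, Fintype.card_fin]; omega
  let σ : Equiv.Perm (Fin (p + q)) := finSumFinEquiv.symm.trans (finSumEquivOfFinset hS hS')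
  have hl : ∀ i : Fin p, σ (Fin.castAdd q i) = S.orderEmbOfFin hS i := fun i => by simp [σ]
  have hr : ∀ i : Fin q, σ (Fin.natAdd p i) = Sᶜ.orderEmbOfFin hS' i := fun i => by simp [σ]
  refine ⟨σ, ?_, ?_⟩
  · simp only [shuffles, Finset.mem_filter, Finset.mem_univ, true_and]
    refine ⟨fun i j hij hj => ?_, fun i j hij hi => ?_⟩
    · obtain ⟨i, rfl⟩ : ∃ i', i = Fin.castAdd q i' := ⟨⟨i, lt_trans hij hj⟩, rfl⟩
      obtain ⟨j, rfl⟩ : ∃ j', j = Fin.castAdd q j' := ⟨⟨j, hj⟩, rfl⟩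
      rw [hl, hl]
      exact (S.orderEmbOfFin hS).strictMono hij
    · obtain ⟨i, rfl⟩ : ∃ i', i = Fin.natAdd p i' :=
        ⟨⟨i - p, by omega⟩, by ext; simp; omega⟩
      obtain ⟨j, rfl⟩ : ∃ j', j = Fin.natAdd p j' :=
        ⟨⟨j - p, by omega⟩, by
          have : p + (i : ℕ) < j := hij
          ext; simp; omega⟩
      rw [hr, hr]
      exact (Sᶜ.orderEmbOfFin hS').strictMono (by simpa using hij)
  · simp_rw [hl]
    ext x
    rw [Finset.mem_image, ← Finset.mem_coe, ← Finset.range_orderEmbOfFin S hS]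
    simp only [Finset.mem_univ, true_and, Set.mem_range]

/-- A signed sum over shuffles is a sum over subsets. -/
theorem sum_shuffles_map_append {p q : ℕ} (f : M [⋀^Fin (p + q)]→ₗ[R] N)
    (u w : Fin (p + q) → M) :
    ∑ σ ∈ shuffles p q, (Equiv.Perm.sign σ : ℤ) •
        f (Fin.append (fun i => u (σ (Fin.castAdd q i))) (fun i => w (σ (Fin.natAdd p i)))) =
      ∑ S ∈ Finset.powersetCard p Finset.univ, f (S.piecewise u w) := by
  refine Finset.sum_nbij (fun σ => Finset.univ.image (fun i : Fin p => σ (Fin.castAdd q i)))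
    ?_ ?_ ?_ ?_
  · intro σ _
    simp only [Finset.mem_powersetCard_univ]
    exact card_image_castAdd σ
  · intro σ hσ τ hτ h
    exact shuffle_eq_of_image_eq hσ hτ h
  · intro S hS
    exact exists_shuffle_image_eq (by simpa using hS)
  · intro σ _
    rw [← piecewise_comp_shuffle, AlternatingMap.map_perm, Units.smul_def, smul_smul]
    simp

end Combinatorics

section Multiplication

variable {K : Type} [Field K] {n : ℕ}

theorem wedge_span (p : ℕ) :
    Submodule.span K (Set.range (wedge K n (p := p))) = ⊤ :=
  exteriorPower.ιMulti_span K p (V K n)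

theorem Lam_induction {p : ℕ} {P : Lam K n p → Prop} (x : Lam K n p)
    (hw : ∀ v, P (wedge K n v)) (h0 : P 0) (ha : ∀ x y, P x → P y → P (x + y))
    (hs : ∀ (c : K) x, P x → P (c • x)) : P x := by
  have hx : x ∈ Submodule.span K (Set.range (wedge K n (p := p))) := by
    rw [wedge_span]; trivial
  induction hx using Submodule.span_induction with
  | mem x h => obtain ⟨v, rfl⟩ := h; exact hw v
  | zero => exact h0
  | add x y _ _ hx hy => exact ha x y hx hy
  | smul c x _ hx => exact hs c x hx

theorem Lam_hom_ext {p : ℕ} {M : Type*} [AddCommGroup M] [Module K M]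
    {f g : Lam K n p →ₗ[K] M} (h : ∀ v, f (wedge K n v) = g (wedge K n v)) : f = g :=
  exteriorPower.linearMap_ext (AlternatingMap.ext h)

@[simp]
theorem coe_wedge {p : ℕ} (v : Fin p → V K n) :
    (wedge K n v : ExteriorAlgebra K (V K n)) = ExteriorAlgebra.ιMulti K p v := rfl

@[simp]
theorem coe_ecast {p q : ℕ} (h : p = q) (x : Lam K n p) :
    (ecast K n h x : ExteriorAlgebra K (V K n)) = x := by
  subst h; rfl

variable {mf : ∀ p q : ℕ, Lam K n p ⊗[K] Lam K n q →ₗ[K] Lam K n (p+q)}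
variable {Df : ∀ p q : ℕ, Lam K n (p+q) →ₗ[K] Lam K n p ⊗[K] Lam K n q}

theorem coe_mulMap (hmf : ∀ p q, IsMulMap K n p q (mf p q)) {p q : ℕ} (x : Lam K n p)
    (y : Lam K n q) :
    (mf p q (x ⊗ₜ y) : ExteriorAlgebra K (V K n)) = x * y := by
  have h : (Submodule.subtype _ ∘ₗ mf p q) =
      LinearMap.mul' K _ ∘ₗ TensorProduct.map (Submodule.subtype _) (Submodule.subtype _) := by
    refine TensorProduct.ext (Lam_hom_ext fun v => Lam_hom_ext fun w => ?_)
    simp [hmf p q v w, ExteriorAlgebra.ιMulti_mul_ιMulti]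
  exact LinearMap.congr_fun h (x ⊗ₜ y)

variable {B : Type*} [Ring B] [Algebra K B]

/-- The map `x ⊗ y ↦ F x * H y` on `Λ^p ⊗ Λ^q`. -/
def tensorMul (F H : ExteriorAlgebra K (V K n) →ₐ[K] B) (p q : ℕ) :
    Lam K n p ⊗[K] Lam K n q →ₗ[K] B :=
  LinearMap.mul' K B ∘ₗ TensorProduct.map (F.toLinearMap ∘ₗ Submodule.subtype _)
    (H.toLinearMap ∘ₗ Submodule.subtype _)

@[simp]
theorem tensorMul_tmul (F H : ExteriorAlgebra K (V K n) →ₐ[K] B) {p q : ℕ} (x : Lam K n p)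
    (y : Lam K n q) : tensorMul F H p q (x ⊗ₜ y) = F x * H y := rfl

theorem tensorMul_congr_ecast (F H : ExteriorAlgebra K (V K n) →ₐ[K] B) {p q p' q' : ℕ}
    (hp : p = p') (hq : q = q') (w : Lam K n p ⊗[K] Lam K n q) :
    tensorMul F H p' q' (TensorProduct.congr (ecast K n hp) (ecast K n hq) w) =
      tensorMul F H p q w := by
  induction w using TensorProduct.induction_on with
  | zero => simp
  | tmul x y => simp
  | add x y hx hy => simp only [map_add, hx, hy]

/-- The comultiplication, in terms of subsets of the index set. -/
theorem tensorMul_comul (hDf : ∀ p q, IsComulMap K n p q (Df p q))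
    {M : Type*} [AddCommGroup M] [Module K M] (Ψ : ExteriorAlgebra K M →ₐ[K] B)
    (f g : V K n →ₗ[K] M) {p q : ℕ} (v : Fin (p + q) → V K n) :
    tensorMul (Ψ.comp (ExteriorAlgebra.map f)) (Ψ.comp (ExteriorAlgebra.map g)) p q
        (Df p q (wedge K n v)) =
      ∑ S ∈ Finset.powersetCard p Finset.univ,
        Ψ (ExteriorAlgebra.ιMulti K (p + q) (S.piecewise (f ∘ v) (g ∘ v))) := by
  rw [hDf p q v, ← map_sum, ← sum_shuffles_map_append, map_sum, map_sum]
  refine Finset.sum_congr rfl fun σ _ => ?_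
  rw [map_zsmul, map_zsmul, ← ExteriorAlgebra.ιMulti_mul_ιMulti, tensorMul_tmul, map_mul]
  simp [Function.comp_def, ExteriorAlgebra.map_apply_ιMulti]

theorem tensorMul_theta1 (hmf : ∀ p q, IsMulMap K n p q (mf p q))
    (F H : ExteriorAlgebra K (V K n) →ₐ[K] B) {a b : ℕ} (hb : 1 ≤ b)
    (x : Lam K n (a + 1)) (z : Lam K n (b - 1)) :
    tensorMul F H a b (theta1 K n mf Df a b hb (x ⊗ₜ z)) =
      tensorMul F H a 1 (Df a 1 x) * H z := by
  have key : ∀ w : Lam K n a ⊗[K] Lam K n 1,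
      tensorMul F H a (b - 1 + 1) (TensorProduct.map LinearMap.id
        ((ecast K n (by omega : 1 + (b - 1) = b - 1 + 1)).toLinearMap ∘ₗ mf 1 (b - 1))
        (TensorProduct.assoc K _ _ _ (w ⊗ₜ z))) = tensorMul F H a 1 w * H z := by
    intro w
    induction w using TensorProduct.induction_on with
    | zero => simp
    | tmul x y => simp [coe_mulMap hmf, mul_assoc]
    | add x y hx hy => simp only [map_add, TensorProduct.add_tmul, hx, hy, add_mul]
  rw [← key]
  unfold theta1
  rw [LinearMap.comp_apply, LinearEquiv.coe_coe, tensorMul_congr_ecast]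
  rfl

end Multiplication

section GradedCommutativity

variable {K M : Type*} [CommRing K] [AddCommGroup M] [Module K M]

theorem ι_mul_comm_of_mem {q : ℕ} (u : M) {y : ExteriorAlgebra K M} (hy : y ∈ ⋀[K]^q M) :
    ExteriorAlgebra.ι K u * y = (-1 : K) ^ q • (y * ExteriorAlgebra.ι K u) := by
  induction hy using Submodule.pow_induction_on_left' with
  | algebraMap r => simp [Algebra.commutes]
  | add x y i _ _ ihx ihy => rw [mul_add, add_mul, ihx, ihy, smul_add]
  | mem_mul m hm i x hx ih =>
    obtain ⟨w, rfl⟩ := hm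
    rw [← mul_assoc, eq_neg_of_add_eq_zero_left (ExteriorAlgebra.ι_add_mul_swap u w), neg_mul,
      mul_assoc, ih, pow_succ, mul_neg_one, neg_smul, mul_smul_comm, mul_assoc]

theorem mul_comm_of_mem {p q : ℕ} {x y : ExteriorAlgebra K M} (hx : x ∈ ⋀[K]^p M)
    (hy : y ∈ ⋀[K]^q M) : x * y = (-1 : K) ^ (p * q) • (y * x) := by
  induction hx using Submodule.pow_induction_on_left' with
  | algebraMap r => simp [Algebra.commutes]
  | add x x' i _ _ ihx ihy => rw [mul_add, add_mul, ihx, ihy, smul_add]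
  | mem_mul m hm i x hx ih =>
    obtain ⟨w, rfl⟩ := hm
    rw [mul_assoc, ih, mul_smul_comm, ← mul_assoc, ι_mul_comm_of_mem w hy, smul_mul_assoc,
      mul_assoc, smul_smul, ← pow_add, Nat.succ_mul]

theorem map_mem_exteriorPower {N : Type*} [AddCommGroup N] [Module K N] (f : M →ₗ[K] N) {p : ℕ}
    {x : ExteriorAlgebra K M} (hx : x ∈ ⋀[K]^p M) : ExteriorAlgebra.map f x ∈ ⋀[K]^p N := by
  rw [← ExteriorAlgebra.ιMulti_span_fixedDegree] at hx ⊢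
  induction hx using Submodule.span_induction with
  | mem x h =>
    obtain ⟨v, rfl⟩ := h
    rw [ExteriorAlgebra.map_apply_ιMulti]
    exact Submodule.subset_span ⟨_, rfl⟩
  | zero => rw [map_zero]; exact Submodule.zero_mem _
  | add x y _ _ hx hy => rw [map_add]; exact Submodule.add_mem _ hx hy
  | smul c x _ hx => rw [map_smul]; exact Submodule.smul_mem _ c hx

end GradedCommutativity

section Doubling

variable {K : Type} [Field K] {n : ℕ}

variable (K n) in
/-- The map of exterior algebras induced by the first inclusion `V → V × V`. -/
def inL : ExteriorAlgebra K (V K n) →ₐ[K] ExteriorAlgebra K (V K n × V K n) :=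
  ExteriorAlgebra.map (LinearMap.inl K (V K n) (V K n))

variable (K n) in
/-- The map of exterior algebras induced by the second inclusion `V → V × V`. -/
def inR : ExteriorAlgebra K (V K n) →ₐ[K] ExteriorAlgebra K (V K n × V K n) :=
  ExteriorAlgebra.map (LinearMap.inr K (V K n) (V K n))

variable (K n) in
/-- The map of exterior algebras induced by the diagonal `V → V × V`. -/
def diag : ExteriorAlgebra K (V K n) →ₐ[K] ExteriorAlgebra K (V K n × V K n) :=
  ExteriorAlgebra.map (LinearMap.inl K (V K n) (V K n) + LinearMap.inr K (V K n) (V K n))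

theorem inR_mul_inL {p q : ℕ} (y : Lam K n q) (x : Lam K n p) :
    inR K n y * inL K n x = (-1 : K) ^ (q * p) • (inL K n x * inR K n y) :=
  mul_comm_of_mem (map_mem_exteriorPower _ y.2) (map_mem_exteriorPower _ x.2)

variable (K n) in
/-- The isomorphism from `Λ(V × V)` to the graded tensor square of `Λ(V)`, as a homomorphism. -/
def toGradedTensor : ExteriorAlgebra K (V K n × V K n) →ₐ[K]
    GradedTensorProduct K (CliffordAlgebra.evenOdd (0 : QuadraticForm K (V K n)))
      (CliffordAlgebra.evenOdd (0 : QuadraticForm K (V K n))) :=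
  ExteriorAlgebra.lift K ⟨(CliffordAlgebra.ofProd 0 0).toLinearMap ∘ₗ CliffordAlgebra.ι _,
    fun m => by
      simp only [LinearMap.comp_apply, AlgHom.toLinearMap_apply, ← map_mul,
        CliffordAlgebra.ι_sq_scalar]
      simp⟩

theorem toGradedTensor_inL (x : ExteriorAlgebra K (V K n)) :
    toGradedTensor K n (inL K n x) = GradedTensorProduct.includeLeft _ _ x := by
  have h : (toGradedTensor K n).comp (inL K n) = GradedTensorProduct.includeLeft _ _ := by
    apply ExteriorAlgebra.hom_ext
    ext v
    simp [toGradedTensor, inL]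
  exact DFunLike.congr_fun h x

theorem toGradedTensor_inR (x : ExteriorAlgebra K (V K n)) :
    toGradedTensor K n (inR K n x) = GradedTensorProduct.includeRight _ _ x := by
  have h : (toGradedTensor K n).comp (inR K n) = GradedTensorProduct.includeRight _ _ := by
    apply ExteriorAlgebra.hom_ext
    ext v
    simp [toGradedTensor, inR]
  exact DFunLike.congr_fun h x

variable (K n) in
/-- The projection of the exterior algebra onto its component of degree `p`. -/
def degProj (p : ℕ) : ExteriorAlgebra K (V K n) →ₗ[K] Lam K n p :=
  DirectSum.component K ℕ _ p ∘ₗ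
    (DirectSum.decomposeLinearEquiv (fun i : ℕ => ⋀[K]^i (V K n))).toLinearMap

theorem degProj_coe {p : ℕ} (x : Lam K n p) : degProj K n p x = x := by
  simp [degProj]

theorem degProj_coe_of_ne {p q : ℕ} (h : p ≠ q) (x : Lam K n p) : degProj K n q x = 0 := by
  simp only [degProj, LinearMap.comp_apply, LinearEquiv.coe_coe,
    DirectSum.decomposeLinearEquiv_apply, DirectSum.decompose_coe]
  exact DirectSum.of_eq_of_ne _ _ _ h.symm

variable (K n) in
/-- The projection of `Λ(V × V)` onto its component `Λ^a ⊗ Λ^b`. -/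
def biProj (a b : ℕ) : ExteriorAlgebra K (V K n × V K n) →ₗ[K] Lam K n a ⊗[K] Lam K n b :=
  TensorProduct.map (degProj K n a) (degProj K n b) ∘ₗ
    (GradedTensorProduct.of K _ _).symm.toLinearMap ∘ₗ (toGradedTensor K n).toLinearMap

theorem biProj_inL_mul_inR (a b : ℕ) (x y : ExteriorAlgebra K (V K n)) :
    biProj K n a b (inL K n x * inR K n y) = degProj K n a x ⊗ₜ degProj K n b y := by
  simp only [biProj, LinearMap.comp_apply, AlgHom.toLinearMap_apply, map_mul, toGradedTensor_inL,
    toGradedTensor_inR]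
  erw [GradedTensorProduct.tmul_one_mul_one_tmul]
  rfl

end Doubling

section Bidegree

variable {K : Type} [Field K] {n : ℕ}

/-- The wedge in `Λ(V × V)` of the vectors `(v i, 0)` for `i ∈ Q` and `(0, v i)` for `i ∉ Q`. -/
def splitWedge {m : ℕ} (v : Fin m → V K n) (Q : Finset (Fin m)) :
    ExteriorAlgebra K (V K n × V K n) :=
  ExteriorAlgebra.ιMulti K m
    (Q.piecewise (LinearMap.inl K (V K n) (V K n) ∘ v) (LinearMap.inr K (V K n) (V K n) ∘ v))

theorem exists_splitWedge_eq {m p q : ℕ} (hm : m = p + q) (v : Fin m → V K n)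
    {Q : Finset (Fin m)} (hQ : Q.card = p) :
    ∃ (x : Lam K n p) (y : Lam K n q), splitWedge v Q = inL K n x * inR K n y := by
  subst hm
  obtain ⟨σ, -, rfl⟩ := exists_shuffle_image_eq hQ
  refine ⟨(Equiv.Perm.sign σ : ℤ) • wedge K n (fun i => v (σ (Fin.castAdd q i))),
    wedge K n (fun i => v (σ (Fin.natAdd p i))), ?_⟩
  have h := AlternatingMap.map_perm (ExteriorAlgebra.ιMulti K (p + q))
    ((Finset.univ.image (fun i : Fin p => σ (Fin.castAdd q i))).piecewise
      (LinearMap.inl K (V K n) (V K n) ∘ v) (LinearMap.inr K (V K n) (V K n) ∘ v)) σ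
  rw [piecewise_comp_shuffle, ← ExteriorAlgebra.ιMulti_mul_ιMulti] at h
  have h2 : splitWedge v (Finset.univ.image (fun i : Fin p => σ (Fin.castAdd q i))) =
      (Equiv.Perm.sign σ : ℤ) • (Equiv.Perm.sign σ •
        splitWedge v (Finset.univ.image (fun i : Fin p => σ (Fin.castAdd q i)))) := by
    rw [Units.smul_def, smul_smul]
    simp
  rw [h2, splitWedge, ← h]
  simp [inL, inR, ExteriorAlgebra.map_apply_ιMulti, Function.comp_def, mul_assoc]

theorem biProj_splitWedge_mul_eq_zero {m a b c d : ℕ} (v : Fin m → V K n) {Q : Finset (Fin m)}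
    (hQ : Q.card + c ≠ a) (y : Lam K n c) (z : Lam K n d) :
    biProj K n a b (splitWedge v Q * inL K n y * inR K n z) = 0 := by
  have hm : m = Q.card + (m - Q.card) := by
    have := Finset.card_le_univ Q
    rw [Fintype.card_fin] at this
    omega
  obtain ⟨x, w, hxw⟩ := exists_splitWedge_eq hm v rfl
  rw [hxw, mul_assoc (inL K n x), inR_mul_inL, mul_smul_comm, smul_mul_assoc, map_smul,
    ← mul_assoc, ← map_mul, mul_assoc, ← map_mul, biProj_inL_mul_inR]
  have hxy : (x : ExteriorAlgebra K (V K n)) * y ∈ ⋀[K]^(Q.card + c) (V K n) :=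
    SetLike.mul_mem_graded x.2 y.2
  rw [degProj_coe_of_ne hQ ⟨_, hxy⟩, TensorProduct.zero_tmul, smul_zero]

theorem powersetCard_univ_fin (m : ℕ) :
    Finset.powersetCard m (Finset.univ : Finset (Fin m)) = {Finset.univ} := by
  have h := Finset.powersetCard_self (Finset.univ : Finset (Fin m))
  rwa [Finset.card_univ, Fintype.card_fin] at h

theorem diag_ιMulti {m : ℕ} (v : Fin m → V K n) :
    diag K n (ExteriorAlgebra.ιMulti K m v) = ∑ Q : Finset (Fin m), splitWedge v Q := by
  have h := sum_powersetCard_map_piecewise_add le_rfl (ExteriorAlgebra.ιMulti K m)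
    (LinearMap.inl K (V K n) (V K n) ∘ v) (LinearMap.inr K (V K n) (V K n) ∘ v)
  rw [powersetCard_univ_fin, Finset.sum_singleton, Finset.piecewise_univ] at h
  simp only [Nat.sub_self, Nat.choose_zero_right, one_smul] at h
  rw [diag, ExteriorAlgebra.map_apply_ιMulti]
  exact h

/-- Only the terms of the correct bidegree survive the projection. -/
theorem biProj_sum_smul_splitWedge {m a b c d : ℕ} (hc : c ≤ a) (g : ℕ → ℕ) (v : Fin m → V K n)
    (y : Lam K n c) (z : Lam K n d) :
    biProj K n a b ((∑ Q : Finset (Fin m), g Q.card • splitWedge v Q) * inL K n y * inR K n z) =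
      g (a - c) • biProj K n a b
        (diag K n (ExteriorAlgebra.ιMulti K m v) * inL K n y * inR K n z) := by
  rw [diag_ιMulti]
  simp only [Finset.sum_mul, map_sum, Finset.smul_sum, smul_mul_assoc, map_nsmul]
  refine Finset.sum_congr rfl fun Q _ => ?_
  by_cases hQ : Q.card + c = a
  · rw [show Q.card = a - c by omega]
  · rw [biProj_splitWedge_mul_eq_zero v hQ, smul_zero, smul_zero]

variable {mf : ∀ p q : ℕ, Lam K n p ⊗[K] Lam K n q →ₗ[K] Lam K n (p+q)}
variable {Df : ∀ p q : ℕ, Lam K n (p+q) →ₗ[K] Lam K n p ⊗[K] Lam K n q}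

theorem sum_powersetCard_splitWedge {m p : ℕ} (v : Fin m → V K n) :
    ∑ S ∈ Finset.powersetCard p Finset.univ, splitWedge v S =
      ∑ Q : Finset (Fin m), (if Q.card = p then 1 else 0) • splitWedge v Q := by
  rw [Finset.powersetCard_eq_filter, Finset.sum_filter, Finset.powerset_univ]
  refine Finset.sum_congr rfl fun Q _ => ?_
  split_ifs <;> simp

theorem biProj_comul_inL_inR (hDf : ∀ p q, IsComulMap K n p q (Df p q)) {a b c d p q : ℕ}
    (h : p + c = a) (x : Lam K n (p + q)) (y : Lam K n c) (z : Lam K n d) :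
    biProj K n a b (tensorMul (inL K n) (inR K n) p q (Df p q x) * inL K n y * inR K n z) =
      biProj K n a b (diag K n x * inL K n y * inR K n z) := by
  induction x using Lam_induction with
  | hw v =>
    have h1 := tensorMul_comul hDf (AlgHom.id K _) (LinearMap.inl K (V K n) (V K n))
      (LinearMap.inr K (V K n) (V K n)) v
    have h2 := biProj_sum_smul_splitWedge (b := b) (by omega : c ≤ a)
      (fun i => if i = p then 1 else 0) v y z
    rw [← sum_powersetCard_splitWedge, if_pos (by omega), one_smul] at h2
    rw [coe_wedge, ← h2]
    exact congrArg (fun t => biProj K n a b (t * _ * _)) h1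
  | h0 => simp
  | ha x x' hx hx' => simp only [map_add, Submodule.coe_add, add_mul, hx, hx']
  | hs r x hx => simp only [map_smul, Submodule.coe_smul, smul_mul_assoc, hx]

theorem biProj_comul_diag_inR (hDf : ∀ p q, IsComulMap K n p q (Df p q)) {a b c d p q : ℕ}
    (hc : c ≤ a) (x : Lam K n (p + q)) (y : Lam K n c) (z : Lam K n d) :
    biProj K n a b (tensorMul (diag K n) (inR K n) p q (Df p q x) * inL K n y * inR K n z) =
      (p + q - (a - c)).choose q • biProj K n a b (diag K n x * inL K n y * inR K n z) := by
  induction x using Lam_induction with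
  | hw v =>
    have h1 := tensorMul_comul hDf (AlgHom.id K _)
      (LinearMap.inl K (V K n) (V K n) + LinearMap.inr K (V K n) (V K n))
      (LinearMap.inr K (V K n) (V K n)) v
    have h2 := biProj_sum_smul_splitWedge (b := b) hc (fun i => (p + q - i).choose q) v y z
    have h3 := sum_powersetCard_map_piecewise_add (Nat.le_add_right p q)
      (ExteriorAlgebra.ιMulti K (p + q)) (LinearMap.inl K (V K n) (V K n) ∘ v)
      (LinearMap.inr K (V K n) (V K n) ∘ v)
    rw [Nat.add_sub_cancel_left] at h3
    rw [coe_wedge, ← h2]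
    exact congrArg (fun t => biProj K n a b (t * _ * _)) (h1.trans h3)
  | h0 => simp
  | ha x x' hx hx' => simp only [map_add, Submodule.coe_add, add_mul, hx, hx', smul_add]
  | hs r x hx =>
    simp only [map_smul, Submodule.coe_smul, smul_mul_assoc, hx]
    rw [smul_comm]

theorem biProj_comul_diag_inL (hDf : ∀ p q, IsComulMap K n p q (Df p q)) {a b c d p q : ℕ}
    (hc : c ≤ a) (x : Lam K n (p + q)) (y : Lam K n c) (z : Lam K n d) :
    biProj K n a b (tensorMul (diag K n) (inL K n) p q (Df p q x) * inL K n y * inR K n z) =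
      (a - c).choose q • biProj K n a b (diag K n x * inL K n y * inR K n z) := by
  induction x using Lam_induction with
  | hw v =>
    have h1 := tensorMul_comul hDf (AlgHom.id K _)
      (LinearMap.inl K (V K n) (V K n) + LinearMap.inr K (V K n) (V K n))
      (LinearMap.inl K (V K n) (V K n)) v
    have h2 := biProj_sum_smul_splitWedge (b := b) hc (fun i => i.choose q) v y z
    have h3 := sum_powersetCard_map_piecewise_add (Nat.le_add_right p q)
      (ExteriorAlgebra.ιMulti K (p + q)) (LinearMap.inr K (V K n) (V K n) ∘ v)
      (LinearMap.inl K (V K n) (V K n) ∘ v)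
    rw [Nat.add_sub_cancel_left] at h3
    have h4 : ∑ Q : Finset (Fin (p + q)), (p + q - Q.card).choose q •
        ExteriorAlgebra.ιMulti K (p + q) (Q.piecewise (LinearMap.inr K (V K n) (V K n) ∘ v)
          (LinearMap.inl K (V K n) (V K n) ∘ v)) =
        ∑ Q : Finset (Fin (p + q)), Q.card.choose q • splitWedge v Q := by
      refine Finset.sum_nbij' compl compl (by simp) (by simp) (by simp) (by simp) fun Q _ => ?_
      rw [splitWedge, Finset.piecewise_compl, Finset.card_compl, Fintype.card_fin]
    rw [h4, add_comm (LinearMap.inr K (V K n) (V K n) ∘ v)] at h3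
    rw [coe_wedge, ← h2]
    exact congrArg (fun t => biProj K n a b (t * _ * _)) (h1.trans h3)
  | h0 => simp
  | ha x x' hx hx' => simp only [map_add, Submodule.coe_add, add_mul, hx, hx', smul_add]
  | hs r x hx =>
    simp only [map_smul, Submodule.coe_smul, smul_mul_assoc, hx]
    rw [smul_comm]

theorem biProj_tensorMul {a b : ℕ} (w : Lam K n a ⊗[K] Lam K n b) :
    biProj K n a b (tensorMul (inL K n) (inR K n) a b w) = w := by
  induction w using TensorProduct.induction_on with
  | zero => simp
  | tmul x y => rw [tensorMul_tmul, biProj_inL_mul_inR, degProj_coe, degProj_coe]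
  | add x y hx hy => simp only [map_add, hx, hy]

theorem biProj_diag_mul_inR {a b : ℕ} (x : Lam K n a) (w : Lam K n b) :
    biProj K n a b (diag K n x * inR K n w) = x ⊗ₜ w := by
  induction x using Lam_induction with
  | hw v =>
    have h := biProj_sum_smul_splitWedge (b := b) (Nat.zero_le a) (fun i => if i = a then 1 else 0)
      v (wedge K n (Fin.elim0 : Fin 0 → V K n)) w
    rw [← sum_powersetCard_splitWedge, powersetCard_univ_fin, Finset.sum_singleton, splitWedge,
      Finset.piecewise_univ, coe_wedge, ExteriorAlgebra.ιMulti_zero_apply, map_one, mul_one,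
      mul_one, Nat.sub_zero, if_pos rfl, one_smul, ← ExteriorAlgebra.map_apply_ιMulti] at h
    rw [coe_wedge, ← h]
    exact biProj_tensorMul (wedge K n v ⊗ₜ w)
  | h0 => simp
  | ha x x' hx hx' => simp only [map_add, Submodule.coe_add, add_mul, hx, hx', add_tmul]
  | hs r x hx => simp only [map_smul, Submodule.coe_smul, smul_mul_assoc, hx, smul_tmul']

theorem theta1_tmul (hmf : ∀ p q, IsMulMap K n p q (mf p q))
    (hDf : ∀ p q, IsComulMap K n p q (Df p q)) {a b : ℕ} (hb : 1 ≤ b)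
    (x : Lam K n (a + 1)) (z : Lam K n (b - 1)) :
    theta1 K n mf Df a b hb (x ⊗ₜ z) = biProj K n a b (diag K n x * inR K n z) := by
  have h := biProj_comul_inL_inR (a := a) (b := b) hDf (add_zero a) x
    (wedge K n (Fin.elim0 : Fin 0 → V K n)) z
  rw [coe_wedge, ExteriorAlgebra.ιMulti_zero_apply, map_one, mul_one, mul_one,
    ← tensorMul_theta1 hmf _ _ hb, biProj_tensorMul] at h
  exact h

theorem tensorMul_betaMap (hmf : ∀ p q, IsMulMap K n p q (mf p q)) {a b k : ℕ} (hka : k ≤ a)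
    (hkb : k ≤ b) (x : Lam K n a) (y : Lam K n k) (z : Lam K n (b - k)) :
    tensorMul (inL K n) (inR K n) a b (betaMap K n mf Df a b k hka hkb (x ⊗ₜ (y ⊗ₜ z))) =
      (-1 : K) ^ (k * k) • (tensorMul (inL K n) (inR K n) (a - k) k
        (Df (a - k) k (ecast K n (by omega) x)) * inL K n y * inR K n z) := by
  have key : ∀ w : Lam K n (a - k) ⊗[K] Lam K n k,
      tensorMul (inL K n) (inR K n) _ _ (pairMul K n mf (a - k) k k (b - k) (w ⊗ₜ (y ⊗ₜ z))) =
        (-1 : K) ^ (k * k) • (tensorMul (inL K n) (inR K n) (a - k) k w *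
          inL K n y * inR K n z) := by
    intro w
    induction w using TensorProduct.induction_on with
    | zero => simp
    | tmul p q =>
      simp only [pairMul, LinearMap.comp_apply, LinearEquiv.coe_coe,
        TensorProduct.tensorTensorTensorComm_tmul, TensorProduct.map_tmul, tensorMul_tmul,
        coe_mulMap hmf, map_mul]
      rw [mul_assoc (inL K n p) (inR K n q), inR_mul_inL, mul_smul_comm, smul_mul_assoc,
        smul_smul, ← pow_add, Even.neg_one_pow ⟨_, rfl⟩, one_smul]
      simp only [mul_assoc]
    | add w w' hw hw' =>
      simp only [TensorProduct.add_tmul, map_add, hw, hw', add_mul, smul_add]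
  rw [← key]
  unfold betaMap
  rw [LinearMap.comp_apply, LinearEquiv.coe_coe, tensorMul_congr_ecast]
  rfl

theorem neg_one_pow_mul_self (k : ℕ) : (-1 : K) ^ (k * k) = (-1) ^ k := by
  rcases Nat.even_or_odd k with h | h
  · rw [h.neg_one_pow, (h.mul_left k).neg_one_pow]
  · rw [h.neg_one_pow, (h.mul h).neg_one_pow]

theorem gammaMap_tmul (hmf : ∀ p q, IsMulMap K n p q (mf p q))
    (hDf : ∀ p q, IsComulMap K n p q (Df p q)) {a b k : ℕ} (hka : k ≤ a) (hkb : k ≤ b)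
    (x : Lam K n a) (y : Lam K n k) (z : Lam K n (b - k)) :
    gammaMap K n mf Df a b k hka hkb (x ⊗ₜ (y ⊗ₜ z)) =
      biProj K n a b (diag K n x * inR K n ((y : ExteriorAlgebra K (V K n)) * z)) -
        (-1 : K) ^ k • biProj K n a b (diag K n x * inL K n y * inR K n z) := by
  have h1 : betaMap K n mf Df a b k hka hkb (x ⊗ₜ (y ⊗ₜ z)) =
      (-1 : K) ^ k • biProj K n a b (diag K n x * inL K n y * inR K n z) := by
    rw [← biProj_tensorMul (betaMap K n mf Df a b k hka hkb (x ⊗ₜ (y ⊗ₜ z))),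
      tensorMul_betaMap hmf, map_smul, neg_one_pow_mul_self,
      biProj_comul_inL_inR hDf (by omega), coe_ecast]
  have h2 : (y : ExteriorAlgebra K (V K n)) * z =
      ecast K n (by omega : k + (b - k) = b) (mf k (b - k) (y ⊗ₜ z)) := by
    rw [coe_ecast, coe_mulMap hmf]
  rw [h2, biProj_diag_mul_inR, ← h1]
  rfl

end Bidegree

section Inclusions

variable {K : Type} [Field K] {n : ℕ} {a b : ℕ}

/-- The submodule `N` contains the component in `Λ^a ⊗ Λ^b` of `Δ(X) (1 ⊗ w)` for all `X` of
degree `i`. -/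
def ContainsDiag (N : Submodule K (Lam K n a ⊗[K] Lam K n b)) (i : ℕ) : Prop :=
  ∀ ⦃j : ℕ⦄ ⦃X w : ExteriorAlgebra K (V K n)⦄, X ∈ ⋀[K]^i (V K n) → w ∈ ⋀[K]^j (V K n) →
    i + j = a + b → biProj K n a b (diag K n X * inR K n w) ∈ N

theorem inL_ι_eq (u : V K n) :
    inL K n (ExteriorAlgebra.ι K u) =
      diag K n (ExteriorAlgebra.ι K u) - inR K n (ExteriorAlgebra.ι K u) := by
  rw [inL, diag, inR, ExteriorAlgebra.map_apply_ι, ExteriorAlgebra.map_apply_ι,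
    ExteriorAlgebra.map_apply_ι, ← map_sub]
  simp

theorem inR_ι_mul_inL {c : ℕ} (u : V K n) {y : ExteriorAlgebra K (V K n)}
    (hy : y ∈ ⋀[K]^c (V K n)) :
    inR K n (ExteriorAlgebra.ι K u) * inL K n y =
      (-1 : K) ^ c • (inL K n y * inR K n (ExteriorAlgebra.ι K u)) := by
  rw [inR, ExteriorAlgebra.map_apply_ι]
  exact ι_mul_comm_of_mem _ (map_mem_exteriorPower _ hy)

/-- Modulo `N`, factors can be moved from the left to the right. -/
theorem biProj_exchange {N : Submodule K (Lam K n a ⊗[K] Lam K n b)} {i c d : ℕ}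
    {X y z : ExteriorAlgebra K (V K n)} (hX : X ∈ ⋀[K]^i (V K n)) (hy : y ∈ ⋀[K]^c (V K n))
    (hz : z ∈ ⋀[K]^d (V K n)) (h : i + c + d = a + b)
    (hN : ∀ i', i < i' → i' ≤ i + c → ContainsDiag N i') :
    biProj K n a b (diag K n X * inL K n y * inR K n z) -
      (-1 : K) ^ c • biProj K n a b (diag K n X * inR K n (y * z)) ∈ N := by
  induction hy using Submodule.pow_induction_on_left' generalizing i d X z with
  | algebraMap r =>
    simp [Algebra.algebraMap_eq_smul_one]
  | add y y' c _ _ ihy ihy' =>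
    have := N.add_mem (ihy hX hz h hN) (ihy' hX hz h hN)
    simp only [map_add, mul_add, add_mul, smul_add] at this ⊢
    convert this using 1
    abel
  | mem_mul m hm c y hy ih =>
    obtain ⟨u, rfl⟩ := hm
    have hu : ExteriorAlgebra.ι K u ∈ ⋀[K]^1 (V K n) :=
      (pow_one (ExteriorAlgebra.ι K (M := V K n)).range).ge ⟨u, rfl⟩
    have hXu : X * ExteriorAlgebra.ι K u ∈ ⋀[K]^(i + 1) (V K n) := SetLike.mul_mem_graded hX hu
    have huz : ExteriorAlgebra.ι K u * z ∈ ⋀[K]^(1 + d) (V K n) := SetLike.mul_mem_graded hu hz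
    have hyz : y * z ∈ ⋀[K]^(c + d) (V K n) := SetLike.mul_mem_graded hy hz
    have h1 := ih hXu hz (by omega) fun i' hi hi' => hN i' (by omega) (by omega)
    have h2 := hN (i + 1) (by omega) (by omega) hXu hyz (by omega)
    have h3 := ih hX huz (by omega) fun i' hi hi' => hN i' hi (by omega)
    have h4 := N.sub_mem (N.add_mem h1 (N.smul_mem ((-1 : K) ^ c) h2))
      (N.smul_mem ((-1 : K) ^ c) h3)
    convert h4 using 1
    have e1 : diag K n X * inL K n (ExteriorAlgebra.ι K u * y) * inR K n z =
        diag K n (X * ExteriorAlgebra.ι K u) * inL K n y * inR K n z -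
          (-1 : K) ^ c • (diag K n X * inL K n y * inR K n (ExteriorAlgebra.ι K u * z)) := by
      rw [map_mul, inL_ι_eq, sub_mul, inR_ι_mul_inL u hy, map_mul, map_mul]
      simp only [mul_sub, sub_mul, mul_assoc, mul_smul_comm, smul_mul_assoc]
    have e2 : ExteriorAlgebra.ι K u * y * z =
        (-1 : K) ^ c • (y * (ExteriorAlgebra.ι K u * z)) := by
      rw [ι_mul_comm_of_mem u hy, smul_mul_assoc, mul_assoc]
    rw [e1, e2]
    simp only [map_sub, map_smul, mul_smul_comm, smul_sub, smul_smul, pow_succ, mul_neg_one,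
      neg_mul, ← pow_add, Even.neg_one_pow ⟨c, rfl⟩, neg_smul, one_smul]
    abel

variable {mf : ∀ p q : ℕ, Lam K n p ⊗[K] Lam K n q →ₗ[K] Lam K n (p+q)}
variable {Df : ∀ p q : ℕ, Lam K n (p+q) →ₗ[K] Lam K n p ⊗[K] Lam K n q}

theorem containsDiag_range_theta1 [CharZero K] (hmf : ∀ p q, IsMulMap K n p q (mf p q))
    (hDf : ∀ p q, IsComulMap K n p q (Df p q)) (hb : 1 ≤ b) {i : ℕ} (hi : a < i) :
    ContainsDiag (LinearMap.range (theta1 K n mf Df a b hb)) i := by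
  obtain ⟨t, rfl⟩ : ∃ t, i = a + 1 + t := ⟨i - (a + 1), by omega⟩
  intro j X w hX hw hj
  have key : ∀ W : Lam K n (a + 1) ⊗[K] Lam K n t,
      biProj K n a b (tensorMul (diag K n) (inR K n) (a + 1) t W * inR K n w) ∈
        LinearMap.range (theta1 K n mf Df a b hb) := by
    intro W
    induction W using TensorProduct.induction_on with
    | zero => simp
    | tmul x y =>
      have hyw : (y : ExteriorAlgebra K (V K n)) * w ∈ ⋀[K]^(b - 1) (V K n) := by
        have := SetLike.mul_mem_graded y.2 hw
        rwa [show t + j = b - 1 by omega] at this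
      refine ⟨x ⊗ₜ ⟨_, hyw⟩, ?_⟩
      rw [theta1_tmul hmf hDf, tensorMul_tmul, mul_assoc, ← map_mul]
    | add x y hx hy =>
      rw [map_add, add_mul, map_add]
      exact Submodule.add_mem _ hx hy
  have h1 := key (Df (a + 1) t ⟨X, hX⟩)
  have h2 := biProj_comul_diag_inR (b := b) hDf (Nat.zero_le a) ⟨X, hX⟩
    (wedge K n (Fin.elim0 : Fin 0 → V K n)) (⟨w, hw⟩ : Lam K n j)
  rw [coe_wedge, ExteriorAlgebra.ιMulti_zero_apply, map_one, mul_one, mul_one] at h2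
  rw [h2, ← Nat.cast_smul_eq_nsmul K] at h1
  refine (Submodule.smul_mem_iff _ ?_).1 h1
  exact Nat.cast_ne_zero.2 (Nat.choose_pos (by omega)).ne'

theorem range_gammaMap_le [CharZero K] (hmf : ∀ p q, IsMulMap K n p q (mf p q))
    (hDf : ∀ p q, IsComulMap K n p q (Df p q)) (hb : 1 ≤ b) {k : ℕ} (hka : k ≤ a) (hkb : k ≤ b) :
    LinearMap.range (gammaMap K n mf Df a b k hka hkb) ≤
      LinearMap.range (theta1 K n mf Df a b hb) := by
  rintro _ ⟨w, rfl⟩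
  induction w using TensorProduct.induction_on with
  | zero => rw [map_zero]; exact Submodule.zero_mem _
  | add x y hx hy => rw [map_add]; exact Submodule.add_mem _ hx hy
  | tmul x w =>
    induction w using TensorProduct.induction_on with
    | zero => rw [TensorProduct.tmul_zero, map_zero]; exact Submodule.zero_mem _
    | add y z hy hz =>
      rw [TensorProduct.tmul_add, map_add]; exact Submodule.add_mem _ hy hz
    | tmul y z =>
      have h := biProj_exchange (N := LinearMap.range (theta1 K n mf Df a b hb)) x.2 y.2 z.2
        (by omega) fun i hi _ => containsDiag_range_theta1 hmf hDf hb hi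
      have h' := Submodule.smul_mem _ (-(-1 : K) ^ k) h
      rw [gammaMap_tmul hmf hDf]
      convert h' using 1
      rw [smul_sub, smul_smul, neg_mul, ← pow_add, Even.neg_one_pow ⟨k, rfl⟩, neg_smul, neg_smul,
        one_smul]
      abel

theorem range_theta1_le (hmf : ∀ p q, IsMulMap K n p q (mf p q))
    (hDf : ∀ p q, IsComulMap K n p q (Df p q)) (hb : 1 ≤ b) {k : ℕ} (hk : 1 ≤ k) (hka : k ≤ a)
    (hkb : k ≤ b)
    (hne : ∀ s, 1 ≤ s → s ≤ k → (1 : K) - (-1) ^ s * ((a - k + s).choose s : K) ≠ 0) :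
    LinearMap.range (theta1 K n mf Df a b hb) ≤
      LinearMap.range (gammaMap K n mf Df a b k hka hkb) := by
  have main : ∀ r s, s + r = k → 1 ≤ s →
      ContainsDiag (LinearMap.range (gammaMap K n mf Df a b k hka hkb)) (a + s) := by
    intro r
    induction r using Nat.strong_induction_on with
    | _ r ih =>
      intro s hsr hs j X w hX hw hj
      have hw' : w ∈ ⋀[K]^r (V K n) * ⋀[K]^(b - k) (V K n) := by
        rw [← pow_add]
        rwa [show j = r + (b - k) by omega] at hw
      clear hw
      refine Submodule.mul_induction_on hw' (fun y hy z hz => ?_) fun w w' hw hw' => ?_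
      · have key : ∀ W : Lam K n a ⊗[K] Lam K n s,
            biProj K n a b (tensorMul (diag K n) (inR K n) a s W * inR K n (y * z)) -
              (-1 : K) ^ k • biProj K n a b
                (tensorMul (diag K n) (inL K n) a s W * inL K n y * inR K n z) ∈
              LinearMap.range (gammaMap K n mf Df a b k hka hkb) := by
          intro W
          induction W using TensorProduct.induction_on with
          | zero => simp
          | tmul x x' =>
            have hx'y : (x' : ExteriorAlgebra K (V K n)) * y ∈ ⋀[K]^k (V K n) := by
              have := SetLike.mul_mem_graded x'.2 hy
              rwa [hsr] at this
            refine ⟨x ⊗ₜ (⟨_, hx'y⟩ ⊗ₜ ⟨z, hz⟩), ?_⟩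
            rw [gammaMap_tmul hmf hDf]
            simp only [tensorMul_tmul, map_mul, mul_assoc]
          | add x y hx hy =>
            convert Submodule.add_mem _ hx hy using 1
            simp only [map_add, add_mul, smul_add]
            abel
        have h1 := key (Df a s ⟨X, hX⟩)
        have hyz : y * z ∈ ⋀[K]^j (V K n) := by
          have := SetLike.mul_mem_graded hy hz
          rwa [show r + (b - k) = j by omega] at this
        have h2 := biProj_comul_diag_inR (b := b) hDf (Nat.zero_le a) ⟨X, hX⟩
          (wedge K n (Fin.elim0 : Fin 0 → V K n)) (⟨y * z, hyz⟩ : Lam K n j)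
        rw [coe_wedge, ExteriorAlgebra.ιMulti_zero_apply, map_one, mul_one, mul_one, Nat.sub_zero,
          Nat.add_sub_cancel_left, Nat.choose_self, one_smul] at h2
        have h3 := biProj_comul_diag_inL (b := b) hDf (by omega : r ≤ a) ⟨X, hX⟩
          (⟨y, hy⟩ : Lam K n r) (⟨z, hz⟩ : Lam K n (b - k))
        rw [h2, h3, ← Nat.cast_smul_eq_nsmul K, show a - r = a - k + s by omega] at h1
        have h4 := biProj_exchange (N := LinearMap.range (gammaMap K n mf Df a b k hka hkb))
          hX hy hz (by omega) fun i' hi hi' => by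
            obtain ⟨s', rfl⟩ : ∃ s', i' = a + s' := ⟨i' - a, by omega⟩
            exact ih (k - s') (by omega) s' (by omega) (by omega)
        have h5 := Submodule.add_mem _ h1
          (Submodule.smul_mem _ ((-1 : K) ^ k * ((a - k + s).choose s : K)) h4)
        refine (Submodule.smul_mem_iff _ (hne s hs (by omega))).1 ?_
        convert h5 using 1
        have hsign : (-1 : K) ^ k * (-1) ^ r = (-1) ^ s := by
          rw [← hsr, pow_add, mul_assoc, ← pow_add, Even.neg_one_pow ⟨r, rfl⟩, mul_one]
        rw [smul_sub, smul_smul, smul_smul, sub_smul, one_smul, mul_right_comm, hsign]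
        abel
      · rw [map_add, mul_add, map_add]
        exact Submodule.add_mem _ hw hw'
  rintro _ ⟨w, rfl⟩
  induction w using TensorProduct.induction_on with
  | zero => rw [map_zero]; exact Submodule.zero_mem _
  | add x y hx hy => rw [map_add]; exact Submodule.add_mem _ hx hy
  | tmul x w =>
    rw [theta1_tmul hmf hDf]
    exact main (k - 1) 1 (by omega) le_rfl x.2 w.2 (by omega)

end Inclusions

section Equivariance

variable {K : Type} [Field K] {n : ℕ}
variable {mf : ∀ p q : ℕ, Lam K n p ⊗[K] Lam K n q →ₗ[K] Lam K n (p+q)}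
variable {Df : ∀ p q : ℕ, Lam K n (p+q) →ₗ[K] Lam K n p ⊗[K] Lam K n q}
variable {rho : ∀ p : ℕ, GLn K n → (Lam K n p →ₗ[K] Lam K n p)}

theorem coe_extAction (hrho : IsExtAction K n rho) {p : ℕ} (g : GLn K n) (x : Lam K n p) :
    (rho p g x : ExteriorAlgebra K (V K n)) =
      ExteriorAlgebra.map (Matrix.toLin' (g : Matrix (Fin n) (Fin n) K)) x := by
  induction x using Lam_induction with
  | hw v => rw [hrho, coe_wedge, coe_wedge, ExteriorAlgebra.map_apply_ιMulti]; rfl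
  | h0 => simp
  | ha x y hx hy => simp only [map_add, Submodule.coe_add, hx, hy]
  | hs c x hx => simp only [map_smul, Submodule.coe_smul, hx]

theorem tensorMul_map_extAction (hrho : IsExtAction K n rho) {B : Type*} [Ring B] [Algebra K B]
    (F H : ExteriorAlgebra K (V K n) →ₐ[K] B) {p q : ℕ} (g : GLn K n)
    (w : Lam K n p ⊗[K] Lam K n q) :
    tensorMul F H p q (TensorProduct.map (rho p g) (rho q g) w) =
      tensorMul
        (F.comp (ExteriorAlgebra.map (Matrix.toLin' (g : Matrix (Fin n) (Fin n) K))))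
        (H.comp (ExteriorAlgebra.map (Matrix.toLin' (g : Matrix (Fin n) (Fin n) K)))) p q w := by
  induction w using TensorProduct.induction_on with
  | zero => simp
  | tmul x y => simp [coe_extAction hrho]
  | add x y hx hy => simp only [map_add, hx, hy]

theorem comul_extAction (hDf : ∀ p q, IsComulMap K n p q (Df p q)) (hrho : IsExtAction K n rho)
    {p q : ℕ} (g : GLn K n) (x : Lam K n (p + q)) :
    Df p q (rho (p + q) g x) = TensorProduct.map (rho p g) (rho q g) (Df p q x) := by
  induction x using Lam_induction with
  | hw v =>
    rw [hrho, hDf, hDf, map_sum]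
    refine Finset.sum_congr rfl fun σ _ => ?_
    rw [map_zsmul, TensorProduct.map_tmul, hrho, hrho]
  | h0 => simp
  | ha x y hx hy => simp only [map_add, hx, hy]
  | hs c x hx => simp only [map_smul, hx]

theorem rhoT_theta1 (hmf : ∀ p q, IsMulMap K n p q (mf p q))
    (hDf : ∀ p q, IsComulMap K n p q (Df p q)) (hrho : IsExtAction K n rho) {a b : ℕ}
    (hb : 1 ≤ b) (g : GLn K n) (w : Lam K n (a + 1) ⊗[K] Lam K n (b - 1)) :
    rhoT K n rho a b g (theta1 K n mf Df a b hb w) =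
      theta1 K n mf Df a b hb (TensorProduct.map (rho (a + 1) g) (rho (b - 1) g) w) := by
  induction w using TensorProduct.induction_on with
  | zero => simp
  | tmul x z =>
    rw [← biProj_tensorMul (rhoT K n rho a b g _), rhoT, tensorMul_map_extAction hrho,
      tensorMul_theta1 hmf, ← tensorMul_map_extAction hrho, ← comul_extAction hDf hrho,
      AlgHom.comp_apply, ← coe_extAction hrho, ← tensorMul_theta1 hmf (inL K n) (inR K n) hb,
      biProj_tensorMul, TensorProduct.map_tmul]
  | add x y hx hy => simp only [map_add, hx, hy]

theorem rhoT_mem_schurRel (hmf : ∀ p q, IsMulMap K n p q (mf p q))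
    (hDf : ∀ p q, IsComulMap K n p q (Df p q)) (hrho : IsExtAction K n rho) {a b : ℕ}
    (g : GLn K n) {x : Lam K n a ⊗[K] Lam K n b} (hx : x ∈ schurRel K n mf Df a b) :
    rhoT K n rho a b g x ∈ schurRel K n mf Df a b := by
  unfold schurRel at hx ⊢
  split_ifs at hx ⊢ with hb
  · obtain ⟨w, rfl⟩ := hx
    exact ⟨_, (rhoT_theta1 hmf hDf hrho hb g w).symm⟩
  · rw [(Submodule.mem_bot K).1 hx, map_zero]
    exact Submodule.zero_mem _

theorem isQuotIso_of_eq {G' M : Type} [AddCommGroup M] [Module K M] {N₁ N₂ : Submodule K M}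
    (h : N₁ = N₂) {ρ : G' → M →ₗ[K] M} (hρ : ∀ g, ∀ x ∈ N₂, ρ g x ∈ N₂) :
    IsQuotIso K N₁ N₂ ρ ρ := by
  subst h
  refine ⟨LinearEquiv.refl K _, fun g x y hxy => ?_⟩
  rw [LinearEquiv.refl_apply, Submodule.Quotient.eq] at hxy ⊢
  rw [← map_sub]
  exact hρ g _ hxy

theorem eq_of_isQuotIso_of_le {G' M : Type} [AddCommGroup M] [Module K M] [Module.Finite K M]
    {N₁ N₂ : Submodule K M} (h : N₁ ≤ N₂) {ρ : G' → M →ₗ[K] M} (hq : IsQuotIso K N₁ N₂ ρ ρ) :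
    N₁ = N₂ := by
  obtain ⟨e, -⟩ := hq
  have h1 := Submodule.finrank_quotient_add_finrank N₁
  have h2 := Submodule.finrank_quotient_add_finrank N₂
  have h3 := e.finrank_eq
  exact Submodule.eq_of_le_of_finrank_eq h (by omega)

end Equivariance

section EqualDegrees

variable {K : Type} [Field K] {n : ℕ}
variable {mf : ∀ p q : ℕ, Lam K n p ⊗[K] Lam K n q →ₗ[K] Lam K n (p+q)}
variable {Df : ∀ p q : ℕ, Lam K n (p+q) →ₗ[K] Lam K n p ⊗[K] Lam K n q}

theorem biProj_diag_mul_inL_mul_inR {m a b d : ℕ} (x : Lam K n m) (y : Lam K n a)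
    (z : Lam K n d) :
    biProj K n a b (diag K n x * inL K n y * inR K n z) =
      biProj K n a b (inR K n x * inL K n y * inR K n z) := by
  induction x using Lam_induction with
  | hw v =>
    have h := biProj_sum_smul_splitWedge (b := b) le_rfl (fun i => if i = 0 then 1 else 0) v y z
    rw [← sum_powersetCard_splitWedge, Finset.powersetCard_zero, Finset.sum_singleton, splitWedge,
      Finset.piecewise_empty, Nat.sub_self, if_pos rfl, one_smul,
      ← ExteriorAlgebra.map_apply_ιMulti] at h
    exact h.symm
  | h0 => simp
  | ha x x' hx hx' => simp only [map_add, Submodule.coe_add, add_mul, hx, hx']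
  | hs r x hx => simp only [map_smul, Submodule.coe_smul, smul_mul_assoc, hx]

/-- In equal degrees, the image of `γ_a` is spanned by the antisymmetric tensors. -/
theorem exists_gammaMap_self_eq (hmf : ∀ p q, IsMulMap K n p q (mf p q))
    (hDf : ∀ p q, IsComulMap K n p q (Df p q)) {a : ℕ} (x y : Lam K n a) (z : Lam K n (a - a)) :
    ∃ c : K, gammaMap K n mf Df a a a le_rfl le_rfl (x ⊗ₜ (y ⊗ₜ z)) =
      c • (x ⊗ₜ y - y ⊗ₜ x) := by
  have hz : (z : ExteriorAlgebra K (V K n)) ∈ ⋀[K]^0 (V K n) := by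
    rw [← coe_ecast (Nat.sub_self a) z]
    exact (ecast K n (Nat.sub_self a) z).2
  obtain ⟨c, hc⟩ := Submodule.mem_one.1 ((pow_zero (ExteriorAlgebra.ι K (M := V K n)).range).le hz)
  refine ⟨c, ?_⟩
  rw [gammaMap_tmul hmf hDf, biProj_diag_mul_inL_mul_inR, inR_mul_inL, ← hc,
    Algebra.algebraMap_eq_smul_one]
  simp only [map_smul, map_one, mul_smul_comm, mul_one, neg_one_pow_mul_self]
  rw [biProj_diag_mul_inR, biProj_inL_mul_inR, degProj_coe, degProj_coe, smul_sub,
    smul_comm ((-1 : K) ^ a) c, smul_smul ((-1 : K) ^ a), ← pow_add, Even.neg_one_pow ⟨a, rfl⟩,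
    one_smul]

/-- The symmetrized form `x ⊗ y ↦ P x ∧ y + P y ∧ x`. -/
def symmForm (P : V K n →ₗ[K] V K n) (a : ℕ) :
    Lam K n a ⊗[K] Lam K n a →ₗ[K] ExteriorAlgebra K (V K n) :=
  tensorMul (ExteriorAlgebra.map P) (AlgHom.id K _) a a +
    (-1 : K) ^ a • tensorMul (AlgHom.id K _) (ExteriorAlgebra.map P) a a

theorem symmForm_gammaMap_self (hmf : ∀ p q, IsMulMap K n p q (mf p q))
    (hDf : ∀ p q, IsComulMap K n p q (Df p q)) (P : V K n →ₗ[K] V K n) {a : ℕ}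
    (w : Lam K n a ⊗[K] (Lam K n a ⊗[K] Lam K n (a - a))) :
    symmForm P a (gammaMap K n mf Df a a a le_rfl le_rfl w) = 0 := by
  induction w using TensorProduct.induction_on with
  | zero => simp
  | add x y hx hy => rw [map_add, map_add, hx, hy, add_zero]
  | tmul x w =>
    induction w using TensorProduct.induction_on with
    | zero => simp
    | add y z hy hz => rw [TensorProduct.tmul_add, map_add, map_add, hy, hz, add_zero]
    | tmul y z =>
      obtain ⟨c, hc⟩ := exists_gammaMap_self_eq hmf hDf x y z
      have h : ∀ x y : Lam K n a, ExteriorAlgebra.map P x * (y : ExteriorAlgebra K (V K n)) =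
          (-1 : K) ^ a • ((y : ExteriorAlgebra K (V K n)) * ExteriorAlgebra.map P x) :=
        fun x y => by
          rw [mul_comm_of_mem (map_mem_exteriorPower P x.2) y.2, neg_one_pow_mul_self]
      rw [hc, map_smul, map_sub]
      simp only [symmForm, LinearMap.add_apply, LinearMap.smul_apply, tensorMul_tmul,
        AlgHom.id_apply, h]
      rw [add_comm, sub_self, smul_zero]

theorem symmForm_theta1 (hmf : ∀ p q, IsMulMap K n p q (mf p q))
    (hDf : ∀ p q, IsComulMap K n p q (Df p q)) (P : V K n →ₗ[K] V K n) {a : ℕ} (ha : 1 ≤ a)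
    (v : Fin (a + 1) → V K n) (hv : ∀ i, P (v i) = v i) (z : Lam K n (a - 1))
    (hz : ExteriorAlgebra.map P (z : ExteriorAlgebra K (V K n)) = 0) :
    symmForm P a (theta1 K n mf Df a a ha (wedge K n v ⊗ₜ z)) =
      (a + 1) • (ExteriorAlgebra.ιMulti K (a + 1) v * (z : ExteriorAlgebra K (V K n))) := by
  have h1 := tensorMul_comul hDf (AlgHom.id K _) P LinearMap.id v
  rw [ExteriorAlgebra.map_id] at h1
  have hPv : P ∘ v = v := funext hv
  have hS : ∀ S : Finset (Fin (a + 1)), S.piecewise (P ∘ v) ((LinearMap.id : V K n →ₗ[K] V K n) ∘ v) = v := by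
    intro S
    rw [hPv]
    exact Finset.piecewise_same _ _
  simp only [hS, Finset.sum_const, Finset.card_powersetCard, Finset.card_univ, Fintype.card_fin,
    Nat.choose_succ_self_right, AlgHom.id_apply] at h1
  rw [symmForm, LinearMap.add_apply, LinearMap.smul_apply, tensorMul_theta1 hmf,
    tensorMul_theta1 hmf, hz, mul_zero, smul_zero, add_zero, AlgHom.id_apply, ← smul_mul_assoc]
  exact congrArg (· * _) h1

theorem ιMulti_single_ne_zero {m : ℕ} (hm : m ≤ n) :
    ExteriorAlgebra.ιMulti K m (fun i => (Pi.single (Fin.castLE hm i) 1 : V K n)) ≠ 0 := by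
  intro h
  have h1 := ExteriorAlgebra.liftAlternating_apply_ιMulti
    (Pi.single m ((Matrix.detRowAlternating (n := Fin m) (R := K)).compLinearMap
      (LinearMap.funLeft K K (Fin.castLE hm))))
    (fun i => (Pi.single (Fin.castLE hm i) 1 : V K n))
  rw [h, map_zero, Pi.single_eq_same, AlternatingMap.compLinearMap_apply] at h1
  have h2 : (fun i => LinearMap.funLeft K K (Fin.castLE hm)
      (Pi.single (Fin.castLE hm i) 1 : V K n)) = (1 : Matrix (Fin m) (Fin m) K) := by
    ext i j
    simp [LinearMap.funLeft_apply, Pi.single_apply, Matrix.one_apply, Fin.ext_iff, eq_comm]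
  rw [h2] at h1
  exact zero_ne_one (h1.trans (Matrix.det_one))

theorem range_gammaMap_self_ne [CharZero K] (hmf : ∀ p q, IsMulMap K n p q (mf p q))
    (hDf : ∀ p q, IsComulMap K n p q (Df p q)) {a : ℕ} (ha : 2 ≤ a) (hn : a + a ≤ n) :
    LinearMap.range (gammaMap K n mf Df a a a le_rfl le_rfl) ≠
      LinearMap.range (theta1 K n mf Df a a (by omega)) := by
  intro h
  let P : V K n →ₗ[K] V K n := LinearMap.pi fun i => if (i : ℕ) ≤ a then LinearMap.proj i else 0
  have hm : a + 1 + (a - 1) ≤ n := by omega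
  let e : Fin (a + 1 + (a - 1)) → V K n := fun i => Pi.single (Fin.castLE hm i) 1
  have hz : ExteriorAlgebra.map P (wedge K n (fun i => e (Fin.natAdd (a + 1) i)) :
      ExteriorAlgebra K (V K n)) = 0 := by
    rw [coe_wedge, ExteriorAlgebra.map_apply_ιMulti]
    refine (ExteriorAlgebra.ιMulti K (a - 1)).map_coord_zero ⟨0, by omega⟩ ?_
    ext j
    by_cases hj : (j : ℕ) ≤ a
    · simp [P, e, hj, Pi.single_apply, Fin.ext_iff]
      omega
    · simp [P, hj]
  have h1 := symmForm_theta1 hmf hDf P (by omega : 1 ≤ a) (fun i => e (Fin.castAdd (a - 1) i))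
    (fun i => by
      ext j
      by_cases hj : (j : ℕ) ≤ a
      · simp [P, hj]
      · have := i.2
        simp [P, e, hj, Pi.single_apply, Fin.ext_iff]
        omega) _ hz
  have hmem : theta1 K n mf Df a a (by omega) (wedge K n (fun i => e (Fin.castAdd (a - 1) i))
      ⊗ₜ wedge K n (fun i => e (Fin.natAdd (a + 1) i))) ∈
      LinearMap.range (gammaMap K n mf Df a a a le_rfl le_rfl) := by
    rw [h]
    exact LinearMap.mem_range_self _ _
  obtain ⟨w, hw⟩ := hmem
  rw [← hw, symmForm_gammaMap_self hmf hDf, coe_wedge, ExteriorAlgebra.ιMulti_mul_ιMulti,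
    Fin.append_castAdd_natAdd, ← Nat.cast_smul_eq_nsmul K] at h1
  exact smul_ne_zero (Nat.cast_ne_zero.2 (Nat.succ_ne_zero a)) (ιMulti_single_ne_zero hm) h1.symm

end EqualDegrees

theorem one_sub_neg_one_pow_mul_choose_ne_zero {K : Type*} [Field K] [CharZero K] {a k s : ℕ}
    (h : k < a) (hs : 1 ≤ s) :
    (1 : K) - (-1) ^ s * ((a - k + s).choose s : K) ≠ 0 := by
  have h2 : 2 ≤ (a - k + s).choose s := by
    calc 2 ≤ s + 1 := by omega
      _ = (1 + s).choose s := by rw [add_comm 1 s, Nat.choose_succ_self_right]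
      _ ≤ (a - k + s).choose s := Nat.choose_le_choose s (by omega)
  generalize (a - k + s).choose s = c at h2
  rcases Nat.even_or_odd s with hs' | hs'
  · rw [hs'.neg_one_pow, one_mul, sub_ne_zero]
    exact_mod_cast (by omega : 1 ≠ c)
  · rw [hs'.neg_one_pow, neg_one_mul, sub_neg_eq_add]
    exact_mod_cast (by omega : 1 + c ≠ 0)

/-- Corollary 5.4 of the paper: for `a ≥ b ≥ k ≥ 1` and `n ≥ a+b`,
`coker(γ_k) ≅ L_{(a,b)}` as `G`-modules iff `a > k` or `a = b = k = 1`. -/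
theorem statement11 (K : Type) [Field K] [CharZero K] (n : ℕ)
    (a b k : ℕ) (hba : b ≤ a) (hk1 : 1 ≤ k) (hkb : k ≤ b) (hn : a + b ≤ n)
    (mf : ∀ p q : ℕ, Lam K n p ⊗[K] Lam K n q →ₗ[K] Lam K n (p+q))
    (Df : ∀ p q : ℕ, Lam K n (p+q) →ₗ[K] Lam K n p ⊗[K] Lam K n q)
    (hmf : ∀ p q, IsMulMap K n p q (mf p q))
    (hDf : ∀ p q, IsComulMap K n p q (Df p q))
    (rho : ∀ p : ℕ, GLn K n → (Lam K n p →ₗ[K] Lam K n p))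
    (hrho : IsExtAction K n rho) :
    IsQuotIso K
        (LinearMap.range (gammaMap K n mf Df a b k (hkb.trans hba) hkb))
        (schurRel K n mf Df a b)
        (rhoT K n rho a b) (rhoT K n rho a b) ↔
      (k < a ∨ (a = 1 ∧ b = 1 ∧ k = 1)) := by
  have hb : 1 ≤ b := hk1.trans hkb
  have hrel : schurRel K n mf Df a b = LinearMap.range (theta1 K n mf Df a b hb) := dif_pos hb
  have hle := range_gammaMap_le hmf hDf hb (hkb.trans hba) hkb
  constructor
  · intro hq
    rw [hrel] at hq
    have heq := eq_of_isQuotIso_of_le hle hq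
    by_contra hcon
    obtain rfl : k = a := by omega
    obtain rfl : k = b := by omega
    exact range_gammaMap_self_ne hmf hDf (by omega) hn heq
  · intro hcase
    refine isQuotIso_of_eq ?_ fun g x hx => rhoT_mem_schurRel hmf hDf hrho g hx
    rw [hrel]
    refine le_antisymm hle (range_theta1_le hmf hDf hb hk1 (hkb.trans hba) hkb fun s hs hsk => ?_)
    rcases hcase with h | ⟨rfl, rfl, rfl⟩
    · exact one_sub_neg_one_pow_mul_choose_ne_zero h hs
    · obtain rfl : s = 1 := by omega
      norm_num

end MMS
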